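/- arXiv:1607.07580 — 3 statements merged into one kernel-verified Lean document; each statement's English description precedes it below -/
import Mathlib

section
/- Let n ≥ 2, α ∈ (0,1) and 1 ≤ p < n/α. Then for every u ∈ C_c^∞(ℝⁿ), one has ∫_{ℝⁿ}∫_{ℝⁿ} |u(x)−u(y)|^p / |x−y|^{n+pα} dx dy ≥ C_{n,α,p} ∫_{ℝⁿ} |u(x)|^p / |x|^{pα} dx. -/
/-!
The inequality is a ground-state representation in the manner of Frank and Seiringer. Write
`N = n + pα` and `γ = (n - pα) / p`; the function `ω(x) = ‖x‖ ^ (-γ)` solves, at least formally, the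
Euler–Lagrange equation of the inequality. For `ω(x) > ω(y)`, Jensen's inequality gives
(`rpow_ground_state_ineq`)

  `|u(x) - u(y)|^p ≥ |u(x)|^p ω(x)^(1-p) (ω(x) - ω(y))^(p-1) - |u(y)|^p ω(y)^(1-p) (ω(x) - ω(y))^(p-1)`.

Divide by `‖x - y‖ ^ N` and integrate. Each of the two terms is, in one of its variables, the integral
of a radial function against `‖x - y‖ ^ (-N)`, and by homogeneity it equals a constant times
`∫ |u|^p / ‖x‖ ^ (pα)` (`lintegral_outer_kernel`, `lintegral_inner_kernel`). The difference of the
two constants is `∫ τ^(pα-1) (1 - τ^γ)^p Φ(τ) dτ` (`outer_const_eq`), half the Hardy constant; the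
other half comes from the pairs with `x` and `y` exchanged (`two_mul_lintegral_cone_le`).

On the whole region `‖x‖ < ‖y‖` the two constants may both be infinite, because of the singularity
on the diagonal. The argument is therefore run on `‖x‖ < ρ ‖y‖` with `ρ < 1`. This truncation respects
the scaling, so that the computation stays exact with `τ` restricted to `(0, ρ)`, and the subtracted
term is finite (`inner_const_lt_top`, `lintegral_weighted_lt_top`). Letting `ρ → 1` by monotone
convergence (`lintegral_Ioo_le_of_forall_lt_one`) gives the full constant.

The integrals against the kernel are reduced to the function `Φ` by integrating zonal functions in
coordinates adapted to the direction of `x` (`lintegral_zonal`, `lintegral_radial_mul_kernel`).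
-/

open MeasureTheory Filter

/-- Surface measure of the unit sphere `S^{m-1} ⊆ ℝ^m`. -/
noncomputable def sphereSurfaceArea (m : ℕ) : ℝ :=
  2 * Real.pi ^ ((m : ℝ) / 2) / Real.Gamma ((m : ℝ) / 2)

/-- `Φ_{n,α,p}(r)` from the sharp fractional Hardy inequality. -/
noncomputable def Phi (n : ℕ) (α p r : ℝ) : ℝ :=
  sphereSurfaceArea (n - 1) *
    ∫ t in (-1 : ℝ)..1,
      (1 - t ^ 2) ^ (((n : ℝ) - 3) / 2) * (1 - 2 * r * t + r ^ 2) ^ (-(((n : ℝ) + p * α) / 2))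

/-- The sharp fractional Hardy constant `C_{n,α,p}`. -/
noncomputable def hardyConst (n : ℕ) (α p : ℝ) : ℝ :=
  2 * ∫ r in (0 : ℝ)..1,
      r ^ (p * α - 1) * |1 - r ^ (((n : ℝ) - p * α) / p)| ^ p * Phi n α p r

/-! ### Integrating zonal functions -/

/-- Integration of a radial function in polar coordinates, with the surface measure of the sphere
in the closed form `sphereSurfaceArea`. -/
theorem lintegral_norm_euclidean (m : ℕ) (hm : 1 ≤ m) (f : ℝ → ENNReal) (hf : Measurable f) :
    ∫⁻ x : EuclideanSpace ℝ (Fin m), f ‖x‖ =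
      ENNReal.ofReal (sphereSurfaceArea m) *
        ∫⁻ r in Set.Ioi (0 : ℝ), ENNReal.ofReal (r ^ (m - 1)) * f r := by
  have : Nonempty (Fin m) := ⟨⟨0, hm⟩⟩
  set μ : Measure (EuclideanSpace ℝ (Fin m)) := volume with hμ
  have harea : μ.toSphere Set.univ = ENNReal.ofReal (sphereSurfaceArea m) := by
    rw [Measure.toSphere_apply_univ, hμ, EuclideanSpace.volume_ball]
    have hm' : (0 : ℝ) < m := by exact_mod_cast hm
    simp only [finrank_euclideanSpace, Fintype.card_fin, ENNReal.ofReal_one, one_pow, one_mul]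
    rw [← ENNReal.ofReal_natCast, ← ENNReal.ofReal_mul (by positivity)]
    congr 1
    rw [sphereSurfaceArea, Real.Gamma_add_one (by positivity), Real.sqrt_eq_rpow,
      ← Real.rpow_mul_natCast Real.pi_pos.le]
    have := (Real.Gamma_pos_of_pos (s := (m : ℝ) / 2) (by positivity)).ne'
    rw [show (1 / 2 * (m : ℝ)) = m / 2 by ring]
    field_simp
  calc
    ∫⁻ x, f ‖x‖ ∂μ = ∫⁻ x : ({(0)}ᶜ : Set (EuclideanSpace ℝ (Fin m))), f (‖x.1‖)
        ∂(μ.comap (↑)) := by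
      rw [lintegral_subtype_comap (measurableSet_singleton _).compl fun x ↦ f (‖x‖),
        restrict_compl_singleton]
    _ = ∫⁻ x, f x.2 ∂μ.toSphere.prod (.volumeIoiPow (m - 1)) := by
      have := μ.measurePreserving_homeomorphUnitSphereProd.lintegral_comp_emb
        (Homeomorph.measurableEmbedding _) (f ∘ Subtype.val ∘ Prod.snd)
      simpa using this
    _ = μ.toSphere Set.univ * ∫⁻ x : Set.Ioi (0 : ℝ), f x ∂.volumeIoiPow (m - 1) := by
      rw [lintegral_prod _ (by fun_prop)]
      simp [mul_comm]
    _ = _ := by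
      rw [harea]
      congr 1
      rw [Measure.volumeIoiPow, lintegral_withDensity_eq_lintegral_mul _ (by fun_prop) (by fun_prop)]
      exact lintegral_subtype_comap measurableSet_Ioi
        fun a : ℝ ↦ ENNReal.ofReal (a ^ (m - 1)) * f a

/-- Tonelli along the first coordinate axis, for functions of `x 0` and `‖x‖`. -/
theorem lintegral_euclidean_succ (m : ℕ) (H : ℝ → ℝ → ENNReal)
    (hH : Measurable (Function.uncurry H)) :
    ∫⁻ x : EuclideanSpace ℝ (Fin (m + 1)), H (x 0) ‖x‖ =
      ∫⁻ s : ℝ, ∫⁻ z : EuclideanSpace ℝ (Fin m), H s (√(s ^ 2 + ‖z‖ ^ 2)) := by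
  have hm0 : Measurable fun y : Fin (m + 1) → ℝ => H (y 0) (√(∑ i, y i ^ 2)) :=
    hH.comp (f := fun y : Fin (m + 1) → ℝ => (y 0, √(∑ i, y i ^ 2))) (by fun_prop)
  have hm1 : Measurable fun q : ℝ × (Fin m → ℝ) => H q.1 (√(q.1 ^ 2 + ∑ i, q.2 i ^ 2)) :=
    hH.comp (f := fun q : ℝ × (Fin m → ℝ) => (q.1, √(q.1 ^ 2 + ∑ i, q.2 i ^ 2))) (by fun_prop)
  have h1 := (PiLp.volume_preserving_ofLp (Fin (m + 1))).lintegral_comp hm0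
  have h2 := (volume_preserving_piFinSuccAbove (fun _ : Fin (m + 1) => ℝ) 0).lintegral_comp hm1
  calc _ = ∫⁻ x : EuclideanSpace ℝ (Fin (m + 1)), H (x 0) (√(∑ i, x i ^ 2)) := by
        simp [EuclideanSpace.norm_eq]
    _ = _ := h1
    _ = ∫⁻ q : ℝ × (Fin m → ℝ), H q.1 (√(q.1 ^ 2 + ∑ i, q.2 i ^ 2)) := by
        rw [← h2]
        refine lintegral_congr fun y => ?_
        simp [Fin.sum_univ_succ, MeasurableEquiv.piFinSuccAbove, Fin.insertNthEquiv, Fin.tail]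
    _ = ∫⁻ s : ℝ, ∫⁻ z : Fin m → ℝ, H s (√(s ^ 2 + ∑ i, z i ^ 2)) := by
        rw [Measure.volume_eq_prod, lintegral_prod _ hm1.aemeasurable]
    _ = _ := by
        refine lintegral_congr fun s => ?_
        have hm2 : Measurable fun z : Fin m → ℝ => H s (√(s ^ 2 + ∑ i, z i ^ 2)) :=
          hm1.comp (measurable_const.prodMk measurable_id)
        rw [← (PiLp.volume_preserving_ofLp (Fin m)).lintegral_comp hm2]
        refine lintegral_congr fun z => ?_
        rw [EuclideanSpace.norm_eq, Real.sq_sqrt (by positivity)]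
        simp

/-- The substitution `t = cos θ`. -/
theorem lintegral_cos_substitution (g : ℝ → ENNReal) :
    ∫⁻ t in Set.Ioo (-1 : ℝ) 1, g t =
      ∫⁻ θ in Set.Ioo 0 Real.pi, ENNReal.ofReal (Real.sin θ) * g (Real.cos θ) := by
  have himg : Real.cos '' Set.Ioo 0 Real.pi = Set.Ioo (-1) 1 := by
    ext t
    constructor
    · rintro ⟨θ, hθ, rfl⟩
      constructor
      · have := Real.strictAntiOn_cos ⟨hθ.1.le, hθ.2.le⟩ ⟨Real.pi_pos.le, le_rfl⟩ hθ.2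
        simpa using this
      · have := Real.strictAntiOn_cos ⟨le_rfl, Real.pi_pos.le⟩ ⟨hθ.1.le, hθ.2.le⟩ hθ.1
        simpa using this
    · intro ht
      exact ⟨Real.arccos t, ⟨Real.arccos_pos.2 ht.2, Real.arccos_lt_pi.2 ht.1⟩,
        Real.cos_arccos ht.1.le ht.2.le⟩
  rw [← himg, lintegral_image_eq_lintegral_abs_deriv_mul measurableSet_Ioo
    (fun x _ => (Real.hasDerivAt_cos x).hasDerivWithinAt)
    (Real.injOn_cos.mono Set.Ioo_subset_Icc_self)]
  refine setLIntegral_congr_fun measurableSet_Ioo fun θ hθ => ?_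
  rw [abs_neg, abs_of_pos (Real.sin_pos_of_mem_Ioo hθ)]

/-- Polar coordinates in the upper half-plane. -/
theorem lintegral_halfplane_polar (F : ℝ × ℝ → ENNReal) (hF : Measurable F) :
    ∫⁻ s : ℝ, ∫⁻ q in Set.Ioi (0 : ℝ), F (s, q) =
      ∫⁻ r in Set.Ioi (0 : ℝ), ∫⁻ θ in Set.Ioo 0 Real.pi,
        ENNReal.ofReal r * F (r * Real.cos θ, r * Real.sin θ) := by
  have hS : MeasurableSet {z : ℝ × ℝ | 0 < z.2} := measurableSet_lt measurable_const measurable_snd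
  have hG : Measurable ({z : ℝ × ℝ | 0 < z.2}.indicator F) := hF.indicator hS
  calc _ = ∫⁻ s : ℝ, ∫⁻ q : ℝ, {z : ℝ × ℝ | 0 < z.2}.indicator F (s, q) := by
        refine lintegral_congr fun s => ?_
        rw [← lintegral_indicator measurableSet_Ioi]
        rfl
    _ = ∫⁻ z : ℝ × ℝ, {z : ℝ × ℝ | 0 < z.2}.indicator F z := by
        rw [Measure.volume_eq_prod, lintegral_prod _ hG.aemeasurable]
    _ = ∫⁻ r in Set.Ioi (0 : ℝ), ∫⁻ θ in Set.Ioo (-Real.pi) Real.pi, ENNReal.ofReal r *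
          {z : ℝ × ℝ | 0 < z.2}.indicator F (r * Real.cos θ, r * Real.sin θ) := by
        rw [← lintegral_comp_polarCoord_symm, polarCoord_target, Measure.volume_eq_prod,
          ← Measure.prod_restrict, lintegral_prod]
        · simp [polarCoord]
        · refine Measurable.aemeasurable ?_
          simp only [polarCoord, smul_eq_mul]
          refine Measurable.mul (by fun_prop) (hG.comp ?_)
          change Measurable fun p : ℝ × ℝ => (p.1 * Real.cos p.2, p.1 * Real.sin p.2)
          fun_prop
    _ = _ := by
        refine setLIntegral_congr_fun measurableSet_Ioi fun r (hr : 0 < r) => ?_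
        rw [← lintegral_indicator measurableSet_Ioo, ← lintegral_indicator measurableSet_Ioo]
        refine lintegral_congr fun θ => ?_
        by_cases h : θ ∈ Set.Ioo 0 Real.pi
        · have h' : θ ∈ Set.Ioo (-Real.pi) Real.pi := ⟨by linarith [h.1, Real.pi_pos], h.2⟩
          rw [Set.indicator_of_mem h, Set.indicator_of_mem h', Set.indicator_of_mem]
          exact mul_pos hr (Real.sin_pos_of_mem_Ioo h)
        · rw [Set.indicator_of_notMem h]
          by_cases h' : θ ∈ Set.Ioo (-Real.pi) Real.pi
          · rw [Set.indicator_of_mem h', Set.indicator_of_notMem, mul_zero]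
            have h0 : θ ≤ 0 := by
              by_contra! hc
              exact h ⟨hc, h'.2⟩
            have := Real.sin_nonpos_of_nonpos_of_neg_pi_le h0 h'.1.le
            simp only [Set.mem_ofPred_eq, not_lt]
            exact mul_nonpos_of_nonneg_of_nonpos hr.le this
          · rw [Set.indicator_of_notMem h']

/-- The Funk–Hecke type formula: a function of `‖x‖` and of the component of `x` along a unit
vector `e` integrates to a double integral in `r = ‖x‖` and `t = cos ∠(e, x)`, with the Gegenbauer
weight `(1 - t²)^((n-3)/2)`. The orthogonal complement of `e` is integrated radially, which leaves a
half-plane integral. -/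
theorem lintegral_zonal (n : ℕ) (hn : 2 ≤ n) (e : EuclideanSpace ℝ (Fin n)) (he : ‖e‖ = 1)
    (H : ℝ → ℝ → ENNReal) (hH : Measurable (Function.uncurry H)) :
    ∫⁻ x : EuclideanSpace ℝ (Fin n), H (inner ℝ e x) ‖x‖ =
      ∫⁻ r in Set.Ioi (0 : ℝ), ENNReal.ofReal (r ^ (n - 1)) *
        (ENNReal.ofReal (sphereSurfaceArea (n - 1)) *
          ∫⁻ t in Set.Ioo (-1 : ℝ) 1,
            ENNReal.ofReal ((1 - t ^ 2) ^ (((n : ℝ) - 3) / 2)) * H (r * t) r) := by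
  obtain ⟨m, rfl⟩ : ∃ m, n = m + 1 := ⟨n - 1, by omega⟩
  have hm : 1 ≤ m := by omega
  obtain ⟨b, hb⟩ := Orthonormal.exists_orthonormalBasis_extension_of_card_eq (𝕜 := ℝ)
    (E := EuclideanSpace ℝ (Fin (m + 1))) (ι := Fin (m + 1)) (by simp) (v := fun _ => e)
    (s := {0}) ⟨fun i => he, fun i j hij => (hij (Subsingleton.elim _ _)).elim⟩
  have hb0 : b 0 = e := hb 0 rfl
  have hmeas : Measurable fun x : EuclideanSpace ℝ (Fin (m + 1)) => H (x 0) ‖x‖ :=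
    hH.comp (f := fun x : EuclideanSpace ℝ (Fin (m + 1)) => (x 0, ‖x‖)) (by fun_prop)
  have h1 : ∫⁻ x : EuclideanSpace ℝ (Fin (m + 1)), H (inner ℝ e x) ‖x‖ =
      ∫⁻ x : EuclideanSpace ℝ (Fin (m + 1)), H (x 0) ‖x‖ := by
    rw [← b.measurePreserving_repr.lintegral_comp hmeas]
    simp [b.repr_apply_apply, hb0]
  rw [h1, lintegral_euclidean_succ m H hH]
  simp only [Nat.add_sub_cancel]
  have hmeas2 (s : ℝ) : Measurable fun q : ℝ => H s √(s ^ 2 + q ^ 2) :=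
    hH.comp (f := fun q : ℝ => (s, √(s ^ 2 + q ^ 2))) (by fun_prop)
  have hF : Measurable fun z : ℝ × ℝ => ENNReal.ofReal (z.2 ^ (m - 1)) * H z.1 √(z.1 ^ 2 + z.2 ^ 2) :=
    Measurable.mul (by fun_prop)
      (hH.comp (f := fun z : ℝ × ℝ => (z.1, √(z.1 ^ 2 + z.2 ^ 2))) (by fun_prop))
  simp_rw [fun s => lintegral_norm_euclidean m hm _ (hmeas2 s)]
  rw [lintegral_const_mul' _ _ ENNReal.ofReal_ne_top]
  rw [lintegral_halfplane_polar
    (fun z : ℝ × ℝ => ENNReal.ofReal (z.2 ^ (m - 1)) * H z.1 √(z.1 ^ 2 + z.2 ^ 2)) hF,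
    ← lintegral_const_mul' _ _ ENNReal.ofReal_ne_top]
  refine setLIntegral_congr_fun measurableSet_Ioi fun r (hr : 0 < r) => ?_
  simp only
  rw [mul_left_comm, lintegral_cos_substitution]
  congr 1
  rw [← lintegral_const_mul' (ENNReal.ofReal (r ^ m)) _ ENNReal.ofReal_ne_top]
  refine setLIntegral_congr_fun measurableSet_Ioo fun θ hθ => ?_
  have hs := Real.sin_pos_of_mem_Ioo hθ
  have hr2 : √((r * Real.cos θ) ^ 2 + (r * Real.sin θ) ^ 2) = r := by
    rw [show (r * Real.cos θ) ^ 2 + (r * Real.sin θ) ^ 2 = r ^ 2 by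
      nlinarith [Real.sin_sq_add_cos_sq θ], Real.sqrt_sq hr.le]
  rw [hr2, ← mul_assoc, ← mul_assoc, ← mul_assoc, ← ENNReal.ofReal_mul hr.le,
    ← ENNReal.ofReal_mul (by positivity), ← ENNReal.ofReal_mul (by positivity)]
  congr 2
  have h3 : (1 - Real.cos θ ^ 2) ^ (((m + 1 : ℕ) : ℝ) / 2 - 3 / 2) * Real.sin θ
      = Real.sin θ ^ (m - 1) := by
    rw [← Real.sin_sq, ← Real.rpow_natCast (Real.sin θ) 2, ← Real.rpow_mul hs.le,
      ← Real.rpow_natCast (Real.sin θ) (m - 1)]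
    nth_rewrite 2 [← Real.rpow_one (Real.sin θ)]
    rw [← Real.rpow_add hs]
    congr 1
    push_cast [Nat.cast_sub hm]
    ring
  rw [show (((m + 1 : ℕ) : ℝ) - 3) / 2 = ((m + 1 : ℕ) : ℝ) / 2 - 3 / 2 by ring, mul_assoc,
    mul_comm (Real.sin θ), h3, mul_pow]
  conv_rhs => rw [← Nat.sub_add_cancel hm, pow_succ]
  simp only [Nat.add_sub_cancel]
  ring

/-! ### The spherical kernel -/

/-- No integrability is needed: a non-integrable `f` has Bochner integral `0`. -/
theorem ofReal_integral_le_lintegral {X : Type*} [MeasurableSpace X] (μ : Measure X) (f : X → ℝ) :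
    ENNReal.ofReal (∫ x, f x ∂μ) ≤ ∫⁻ x, ENNReal.ofReal (f x) ∂μ := by
  by_cases hf : Integrable f μ
  · rw [integral_eq_lintegral_pos_part_sub_lintegral_neg_part hf]
    refine (ENNReal.ofReal_le_ofReal (sub_le_self _ ENNReal.toReal_nonneg)).trans ?_
    exact ENNReal.ofReal_toReal_le
  · simp [integral_undef hf]

/-- The integral of `|e - rω|^(-N)` over the unit sphere, `e` a unit vector, written in the
variable `t = ⟪e, ω⟫`. It is `Φ_{n,α,p}(r)` for `N = n + pα`, but valued in `[0,∞]` and defined for all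
real `N` and `r`. -/
noncomputable def sphereKernel (n : ℕ) (N r : ℝ) : ENNReal :=
  ENNReal.ofReal (sphereSurfaceArea (n - 1)) *
    ∫⁻ t in Set.Ioo (-1 : ℝ) 1, ENNReal.ofReal ((1 - t ^ 2) ^ (((n : ℝ) - 3) / 2)) *
      ENNReal.ofReal ((1 - 2 * r * t + r ^ 2) ^ (-(N / 2)))

theorem measurable_sphereKernel (n : ℕ) (N : ℝ) : Measurable (sphereKernel n N) := by
  unfold sphereKernel
  refine Measurable.const_mul (Measurable.lintegral_prod_right'
    (f := fun q : ℝ × ℝ => ENNReal.ofReal ((1 - q.2 ^ 2) ^ (((n : ℝ) - 3) / 2)) *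
      ENNReal.ofReal ((1 - 2 * q.1 * q.2 + q.1 ^ 2) ^ (-(N / 2)))) ?_) _
  fun_prop

theorem sphereSurfaceArea_nonneg (m : ℕ) : 0 ≤ sphereSurfaceArea m := by
  unfold sphereSurfaceArea
  have := Real.Gamma_nonneg_of_nonneg (s := (m : ℝ) / 2) (by positivity)
  positivity

theorem ofReal_Phi_le (n : ℕ) (α p r : ℝ) :
    ENNReal.ofReal (Phi n α p r) ≤ sphereKernel n (n + p * α) r := by
  unfold Phi sphereKernel
  rw [ENNReal.ofReal_mul (sphereSurfaceArea_nonneg _),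
    intervalIntegral.integral_of_le (by norm_num)]
  gcongr
  refine (ofReal_integral_le_lintegral _ _).trans ?_
  rw [setLIntegral_congr Ioo_ae_eq_Ioc.symm]
  refine (setLIntegral_congr_fun measurableSet_Ioo fun t ht => ?_).le
  exact ENNReal.ofReal_mul (Real.rpow_nonneg (by nlinarith [ht.1, ht.2]) _)

/-- The `[0,∞]`-valued version of the Hardy constant dominates the Bochner one; only this inequality
is needed, so that finiteness of the constant plays no role. -/
theorem ofReal_hardyConst_le (n : ℕ) (α p : ℝ) (hγ : 0 ≤ ((n : ℝ) - p * α) / p) :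
    ENNReal.ofReal (hardyConst n α p) ≤ 2 * ∫⁻ r in Set.Ioo (0 : ℝ) 1,
      ENNReal.ofReal (r ^ (p * α - 1) * (1 - r ^ (((n : ℝ) - p * α) / p)) ^ p) *
        sphereKernel n (n + p * α) r := by
  unfold hardyConst
  rw [ENNReal.ofReal_mul (by norm_num), intervalIntegral.integral_of_le (by norm_num),
    ENNReal.ofReal_ofNat]
  gcongr
  refine (ofReal_integral_le_lintegral _ _).trans ?_
  rw [setLIntegral_congr Ioo_ae_eq_Ioc.symm]
  refine setLIntegral_mono' measurableSet_Ioo fun r hr => ?_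
  have h1 : 0 ≤ 1 - r ^ (((n : ℝ) - p * α) / p) :=
    sub_nonneg.2 (Real.rpow_le_one hr.1.le hr.2.le hγ)
  rw [abs_of_nonneg h1, ENNReal.ofReal_mul (mul_nonneg (Real.rpow_nonneg hr.1.le _)
    (Real.rpow_nonneg h1 _))]
  gcongr
  exact ofReal_Phi_le n α p r

theorem one_sub_sq_le_chord {r t : ℝ} (hr : 0 ≤ r) (ht : t ≤ 1) :
    (1 - r) ^ 2 ≤ 1 - 2 * r * t + r ^ 2 := by nlinarith

theorem lintegral_sphere_weight_lt_top (n : ℕ) (hn : 2 ≤ n) :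
    ∫⁻ t in Set.Ioo (-1 : ℝ) 1, ENNReal.ofReal ((1 - t ^ 2) ^ (((n : ℝ) - 3) / 2)) < ⊤ := by
  rw [lintegral_cos_substitution]
  refine (setLIntegral_mono' (g := fun _ => 1) measurableSet_Ioo fun θ hθ => ?_).trans_lt
    (by simp)
  have hs := Real.sin_pos_of_mem_Ioo hθ
  have hn' : (2 : ℝ) ≤ n := by exact_mod_cast hn
  rw [← ENNReal.ofReal_mul hs.le, ← Real.sin_sq, ← Real.rpow_natCast (Real.sin θ) 2,
    ← Real.rpow_mul hs.le]
  nth_rewrite 1 [← Real.rpow_one (Real.sin θ)]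
  rw [← Real.rpow_add hs, ENNReal.ofReal_le_one]
  refine Real.rpow_le_one hs.le (Real.sin_le_one θ) ?_
  push_cast
  linarith

/-- Away from `r = 1` the kernel is bounded. -/
theorem sphereKernel_le (n : ℕ) {N ρ r : ℝ} (hN : 0 ≤ N) (hρ : ρ < 1) (hr : r ∈ Set.Ioo 0 ρ) :
    sphereKernel n N r ≤ ENNReal.ofReal (sphereSurfaceArea (n - 1)) *
      ((∫⁻ t in Set.Ioo (-1 : ℝ) 1, ENNReal.ofReal ((1 - t ^ 2) ^ (((n : ℝ) - 3) / 2))) *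
        ENNReal.ofReal (((1 - ρ) ^ 2) ^ (-(N / 2)))) := by
  unfold sphereKernel
  rw [← lintegral_mul_const' _ _ ENNReal.ofReal_ne_top]
  refine mul_le_mul' le_rfl (setLIntegral_mono' measurableSet_Ioo fun t ht => ?_)
  have h1 : (1 - ρ) ^ 2 ≤ 1 - 2 * r * t + r ^ 2 :=
    le_trans (by nlinarith [hr.1, hr.2]) (one_sub_sq_le_chord hr.1.le ht.2.le)
  have h0 : 0 < (1 - ρ) ^ 2 := pow_pos (by linarith) 2
  exact mul_le_mul' le_rfl
    (ENNReal.ofReal_le_ofReal (Real.rpow_le_rpow_of_nonpos h0 h1 (by linarith)))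

/-- Inversion in the unit sphere: `1 - 2t/r + 1/r² = r⁻² (1 - 2rt + r²)`. -/
theorem sphereKernel_inv (n : ℕ) (N : ℝ) {r : ℝ} (hr : r ∈ Set.Ioo (0 : ℝ) 1) :
    sphereKernel n N r⁻¹ = ENNReal.ofReal (r ^ N) * sphereKernel n N r := by
  unfold sphereKernel
  rw [mul_left_comm]
  congr 1
  rw [← lintegral_const_mul' _ _ ENNReal.ofReal_ne_top]
  refine setLIntegral_congr_fun measurableSet_Ioo fun t ht => ?_
  rw [mul_left_comm, ← ENNReal.ofReal_mul (Real.rpow_nonneg hr.1.le _)]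
  congr 2
  have h0 : 0 ≤ 1 - 2 * r * t + r ^ 2 := le_trans (sq_nonneg _) (one_sub_sq_le_chord hr.1.le ht.2.le)
  have h1 : 1 - 2 * r⁻¹ * t + r⁻¹ ^ 2 = (r ^ 2)⁻¹ * (1 - 2 * r * t + r ^ 2) := by
    have := hr.1.ne'
    field_simp
    ring
  rw [h1, Real.mul_rpow (by positivity) h0, Real.inv_rpow (by positivity),
    Real.rpow_neg (by positivity), inv_inv, ← Real.rpow_natCast r 2, ← Real.rpow_mul hr.1.le]
  congr 2
  push_cast
  ring

theorem lintegral_Ioi_scale {s : ℝ} (hs : 0 < s) (f : ℝ → ENNReal) :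
    ∫⁻ r in Set.Ioi (0 : ℝ), f r = ∫⁻ τ in Set.Ioi (0 : ℝ), ENNReal.ofReal s * f (s * τ) := by
  have himg : (fun τ => s * τ) '' Set.Ioi 0 = Set.Ioi 0 := by
    simpa using Set.image_const_mul_Ioi_zero hs
  have := lintegral_image_eq_lintegral_abs_deriv_mul (s := Set.Ioi 0) (f := fun τ => s * τ)
    (f' := fun _ => s) measurableSet_Ioi
    (fun x _ => by simpa using ((hasDerivAt_id x).const_mul s).hasDerivWithinAt)
    (fun a _ b _ h => mul_left_cancel₀ hs.ne' h) f
  rw [himg] at this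
  rw [this, abs_of_pos hs]

/-- Convolving a radial function with `‖·‖^(-N)`: after the scaling `‖y‖ = ‖x‖ τ` the angular
integral becomes `sphereKernel n N τ`. Here `h` is `g` read in the variable `τ`. -/
theorem lintegral_radial_mul_kernel (n : ℕ) (hn : 2 ≤ n) (N : ℝ) (x : EuclideanSpace ℝ (Fin n))
    (hx : x ≠ 0) (g h : ℝ → ENNReal) (hg : Measurable g) (hgh : ∀ τ, 0 < τ → g (‖x‖ * τ) = h τ) :
    ∫⁻ y, g ‖y‖ * ENNReal.ofReal (‖x - y‖ ^ (-N)) =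
      ENNReal.ofReal (‖x‖ ^ ((n : ℝ) - N)) * ∫⁻ τ in Set.Ioi (0 : ℝ),
        ENNReal.ofReal (τ ^ (n - 1)) * h τ * sphereKernel n N τ := by
  have hs : 0 < ‖x‖ := norm_pos_iff.2 hx
  set s := ‖x‖ with hsdef
  set e := (s⁻¹ : ℝ) • x with he
  have he1 : ‖e‖ = 1 := by rw [he, norm_smul, norm_inv, norm_norm, inv_mul_cancel₀ hs.ne']
  have hxe : x = s • e := by rw [he, smul_smul, mul_inv_cancel₀ hs.ne', one_smul]
  have hdist (y : EuclideanSpace ℝ (Fin n)) :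
      ‖x - y‖ ^ (-N) = (s ^ 2 - 2 * s * inner ℝ e y + ‖y‖ ^ 2) ^ (-(N / 2)) := by
    have : ‖x - y‖ ^ 2 = s ^ 2 - 2 * s * inner ℝ e y + ‖y‖ ^ 2 := by
      rw [norm_sub_sq_real]
      nth_rewrite 2 [hxe]
      rw [real_inner_smul_left]
      ring
    rw [← this, ← Real.rpow_natCast ‖x - y‖ 2, ← Real.rpow_mul (norm_nonneg _)]
    congr 1
    push_cast
    ring
  simp_rw [hdist]
  rw [lintegral_zonal n hn e he1 (fun a r => g r *
    ENNReal.ofReal ((s ^ 2 - 2 * s * a + r ^ 2) ^ (-(N / 2)))) (by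
      change Measurable fun q : ℝ × ℝ => g q.2 *
        ENNReal.ofReal ((s ^ 2 - 2 * s * q.1 + q.2 ^ 2) ^ (-(N / 2)))
      fun_prop), lintegral_Ioi_scale hs, ← lintegral_const_mul' _ _ ENNReal.ofReal_ne_top]
  refine setLIntegral_congr_fun measurableSet_Ioi fun τ (hτ : 0 < τ) => ?_
  simp only [hgh τ hτ]
  have key : ∫⁻ t in Set.Ioo (-1 : ℝ) 1, ENNReal.ofReal ((1 - t ^ 2) ^ (((n : ℝ) - 3) / 2)) *
      (h τ * ENNReal.ofReal ((s ^ 2 - 2 * s * (s * τ * t) + (s * τ) ^ 2) ^ (-(N / 2)))) =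
      h τ * ENNReal.ofReal (s ^ (-N)) *
        ∫⁻ t in Set.Ioo (-1 : ℝ) 1, ENNReal.ofReal ((1 - t ^ 2) ^ (((n : ℝ) - 3) / 2)) *
      ENNReal.ofReal ((1 - 2 * τ * t + τ ^ 2) ^ (-(N / 2))) := by
    rw [← lintegral_const_mul _ (by fun_prop)]
    refine setLIntegral_congr_fun measurableSet_Ioo fun t ht => ?_
    have h0 : 0 ≤ 1 - 2 * τ * t + τ ^ 2 :=
      le_trans (sq_nonneg _) (one_sub_sq_le_chord hτ.le ht.2.le)
    have h1 : (s ^ 2 - 2 * s * (s * τ * t) + (s * τ) ^ 2) ^ (-(N / 2)) =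
        s ^ (-N) * (1 - 2 * τ * t + τ ^ 2) ^ (-(N / 2)) := by
      rw [show s ^ 2 - 2 * s * (s * τ * t) + (s * τ) ^ 2 = s ^ 2 * (1 - 2 * τ * t + τ ^ 2) by ring,
        Real.mul_rpow (by positivity) h0, ← Real.rpow_natCast s 2, ← Real.rpow_mul hs.le]
      congr 2
      push_cast
      ring
    simp only [h1]
    rw [ENNReal.ofReal_mul (Real.rpow_nonneg hs.le _)]
    ring
  rw [key]
  have h2 : ENNReal.ofReal (s ^ ((n : ℝ) - N)) * ENNReal.ofReal (τ ^ (n - 1)) =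
      ENNReal.ofReal s * ENNReal.ofReal ((s * τ) ^ (n - 1)) * ENNReal.ofReal (s ^ (-N)) := by
    rw [← ENNReal.ofReal_mul (by positivity), ← ENNReal.ofReal_mul (by positivity),
      ← ENNReal.ofReal_mul (by positivity)]
    congr 1
    rw [mul_pow, sub_eq_add_neg, Real.rpow_add hs, Real.rpow_natCast]
    obtain ⟨m, rfl⟩ : ∃ m, n = m + 1 := ⟨n - 1, by omega⟩
    simp only [Nat.add_sub_cancel, pow_succ]
    ring
  rw [← mul_assoc, ← mul_assoc (ENNReal.ofReal (s ^ ((n : ℝ) - N))),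
    ← mul_assoc (ENNReal.ofReal (s ^ ((n : ℝ) - N))), h2, sphereKernel]
  ring

/-! ### Weights of the ground-state inequality on a truncated region -/

/-- The pointwise ground-state inequality. It is Jensen for `t ↦ t ^ p`, applied to
`(D + V) / X = ((X - Y) / X) * (D / (X - Y)) + (Y / X) * (V / Y)`. It will be used with
`U = |u x|`, `V = |u y|`, `D = |u x - u y|`, `X = ‖x‖^(-γ)` and `Y = ‖y‖^(-γ)`. -/
theorem rpow_ground_state_ineq {p X Y U V D : ℝ} (hp : 1 ≤ p) (hY : 0 < Y) (hXY : Y < X)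
    (hU : 0 ≤ U) (hV : 0 ≤ V) (hD : 0 ≤ D) (hUV : U ≤ D + V) :
    U ^ p * (X ^ (1 - p) * (X - Y) ^ (p - 1)) ≤
      D ^ p + V ^ p * (Y ^ (1 - p) * (X - Y) ^ (p - 1)) := by
  have hX : 0 < X := hY.trans hXY
  have hd : 0 < X - Y := sub_pos.2 hXY
  have hconv := (convexOn_rpow hp).2 (show 0 ≤ D / (X - Y) by positivity)
    (show 0 ≤ V / Y by positivity) (show 0 ≤ (X - Y) / X by positivity)
    (show 0 ≤ Y / X by positivity) (by field_simp; ring)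
  simp only [smul_eq_mul] at hconv
  have e1 : (X - Y) / X * (D / (X - Y)) + Y / X * (V / Y) = (D + V) / X := by
    field_simp
  rw [e1] at hconv
  have hle : (U / X) ^ p ≤ ((D + V) / X) ^ p := by gcongr
  have h := hle.trans hconv
  have hdiv : ∀ {A B : ℝ}, 0 ≤ A → 0 < B → (A / B) ^ p * B = A ^ p * B ^ (1 - p) := by
    intro A B hA hB
    rw [Real.div_rpow hA hB.le, Real.rpow_sub hB, Real.rpow_one]
    field_simp
  have h2 : U ^ p * X ^ (1 - p) ≤ D ^ p * (X - Y) ^ (1 - p) + V ^ p * Y ^ (1 - p) := by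
    rw [← hdiv hU hX, ← hdiv hD hd, ← hdiv hV hY]
    calc (U / X) ^ p * X ≤ ((X - Y) / X * (D / (X - Y)) ^ p + Y / X * (V / Y) ^ p) * X := by
          gcongr
      _ = _ := by field_simp
  have hone : (X - Y) ^ (1 - p) * (X - Y) ^ (p - 1) = 1 := by
    rw [← Real.rpow_add hd]; simp
  have hpos : 0 ≤ (X - Y) ^ (p - 1) := Real.rpow_nonneg hd.le _
  calc U ^ p * (X ^ (1 - p) * (X - Y) ^ (p - 1)) = U ^ p * X ^ (1 - p) * (X - Y) ^ (p - 1) := by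
        ring
    _ ≤ (D ^ p * (X - Y) ^ (1 - p) + V ^ p * Y ^ (1 - p)) * (X - Y) ^ (p - 1) := by gcongr
    _ = D ^ p * ((X - Y) ^ (1 - p) * (X - Y) ^ (p - 1)) +
        V ^ p * (Y ^ (1 - p) * (X - Y) ^ (p - 1)) := by ring
    _ = _ := by rw [hone, mul_one]

theorem lintegral_Ioi_inv (f : ℝ → ENNReal) {ρ : ℝ} (hρ : 0 < ρ) :
    ∫⁻ τ in Set.Ioi ρ⁻¹, f τ =
      ∫⁻ τ in Set.Ioo 0 ρ, ENNReal.ofReal ((τ ^ 2)⁻¹) * f τ⁻¹ := by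
  have himg : (fun τ : ℝ => τ⁻¹) '' Set.Ioo 0 ρ = Set.Ioi ρ⁻¹ := by
    ext t
    constructor
    · rintro ⟨τ, hτ, rfl⟩
      exact inv_strictAnti₀ hτ.1 hτ.2
    · intro ht
      have ht' : ρ⁻¹ < t := ht
      have h0 : 0 < t := (inv_pos.2 hρ).trans ht'
      exact ⟨t⁻¹, ⟨inv_pos.2 h0, (inv_lt_comm₀ h0 hρ).2 ht'⟩, inv_inv t⟩
  rw [← himg, lintegral_image_eq_lintegral_abs_deriv_mul measurableSet_Ioo
    (fun x hx => (hasDerivAt_inv hx.1.ne').hasDerivWithinAt)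
    (fun a _ b _ h => inv_injective h)]
  refine setLIntegral_congr_fun measurableSet_Ioo fun τ hτ => ?_
  rw [abs_neg, abs_of_nonneg (by positivity)]

/-- The weight that multiplies `|u x| ^ p` in the ground-state inequality, integrated over the
`y` with `‖x‖ < ρ ‖y‖`. The inversion `τ ↦ τ⁻¹` brings `‖y‖ / ‖x‖ > ρ⁻¹` back to `(0, ρ)`. -/
theorem lintegral_outer_kernel (n : ℕ) (hn : 2 ≤ n) (N γ p : ℝ) {ρ : ℝ} (hρ : ρ ∈ Set.Ioo (0 : ℝ) 1)
    (hγ : 0 < γ) (x : EuclideanSpace ℝ (Fin n)) (hx : x ≠ 0) :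
    ∫⁻ y, {r : ℝ | ‖x‖ < ρ * r}.indicator (fun r => ENNReal.ofReal
        ((‖x‖ ^ (-γ)) ^ (1 - p) * (‖x‖ ^ (-γ) - r ^ (-γ)) ^ (p - 1))) ‖y‖ *
        ENNReal.ofReal (‖x - y‖ ^ (-N)) =
      ENNReal.ofReal (‖x‖ ^ ((n : ℝ) - N)) * ∫⁻ τ in Set.Ioo (0 : ℝ) ρ,
        ENNReal.ofReal (τ ^ (N - n - 1) * (1 - τ ^ γ) ^ (p - 1)) * sphereKernel n N τ := by
  have hs : 0 < ‖x‖ := norm_pos_iff.2 hx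
  set s := ‖x‖
  rw [lintegral_radial_mul_kernel n hn N x hx _ ((Set.Ioi ρ⁻¹).indicator
    fun τ => ENNReal.ofReal ((1 - τ ^ (-γ)) ^ (p - 1)))]
  · congr 1
    have : ∀ τ : ℝ, ENNReal.ofReal (τ ^ (n - 1)) * (Set.Ioi ρ⁻¹).indicator
        (fun τ => ENNReal.ofReal ((1 - τ ^ (-γ)) ^ (p - 1))) τ * sphereKernel n N τ =
        (Set.Ioi ρ⁻¹).indicator (fun τ => ENNReal.ofReal (τ ^ (n - 1)) *
          ENNReal.ofReal ((1 - τ ^ (-γ)) ^ (p - 1)) * sphereKernel n N τ) τ := by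
      intro τ
      by_cases h : τ ∈ Set.Ioi ρ⁻¹ <;> simp [h]
    simp_rw [this]
    rw [setLIntegral_indicator measurableSet_Ioi, Set.inter_eq_left.2
      (Set.Ioi_subset_Ioi (inv_pos.2 hρ.1).le), lintegral_Ioi_inv _ hρ.1]
    refine setLIntegral_congr_fun measurableSet_Ioo fun τ hτ => ?_
    have hτ0 := hτ.1
    rw [sphereKernel_inv n N ⟨hτ.1, hτ.2.trans hρ.2⟩, Real.rpow_neg (inv_pos.2 hτ0).le,
      Real.inv_rpow hτ0.le, inv_inv]
    have h1 : (0 : ℝ) ≤ 1 - τ ^ γ :=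
      sub_nonneg.2 (Real.rpow_le_one hτ0.le (hτ.2.trans hρ.2).le hγ.le)
    have h2 : 0 ≤ (1 - τ ^ γ) ^ (p - 1) := Real.rpow_nonneg h1 _
    rw [← mul_assoc, ← mul_assoc]
    congr 1
    rw [← ENNReal.ofReal_mul (by positivity), ← ENNReal.ofReal_mul (by positivity),
      ← ENNReal.ofReal_mul (by positivity)]
    congr 1
    have h3 : τ ^ (N - n - 1) = (τ ^ 2)⁻¹ * τ⁻¹ ^ (n - 1) * τ ^ N := by
      have hn' : ((n - 1 : ℕ) : ℝ) = n - 1 := by push_cast [Nat.cast_sub (by omega : 1 ≤ n)]; ring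
      rw [inv_pow, ← Real.rpow_natCast τ 2, ← Real.rpow_natCast τ (n - 1), ← Real.rpow_neg hτ0.le,
        ← Real.rpow_neg hτ0.le, ← Real.rpow_add hτ0, ← Real.rpow_add hτ0, hn']
      congr 1
      push_cast
      ring
    rw [h3]
    ring
  · exact Measurable.indicator (by fun_prop) (measurableSet_lt (by fun_prop) (by fun_prop))
  · intro τ hτ
    have hiff : s * τ ∈ {r : ℝ | s < ρ * r} ↔ τ ∈ Set.Ioi ρ⁻¹ := by
      change s < ρ * (s * τ) ↔ ρ⁻¹ < τ
      rw [inv_lt_iff_one_lt_mul₀ hρ.1]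
      constructor <;> intro h <;> nlinarith
    by_cases h : τ ∈ Set.Ioi ρ⁻¹
    · rw [Set.indicator_of_mem h, Set.indicator_of_mem (hiff.2 h)]
      congr 1
      have hτ1 : 1 ≤ τ := ((one_lt_inv₀ hρ.1).2 hρ.2).le.trans (le_of_lt h)
      have h1 : 0 ≤ 1 - τ ^ (-γ) :=
        sub_nonneg.2 (Real.rpow_le_one_of_one_le_of_nonpos hτ1 (by linarith))
      have hsγ : 0 < s ^ (-γ) := Real.rpow_pos_of_pos hs _
      rw [Real.mul_rpow hs.le hτ.le, show s ^ (-γ) - s ^ (-γ) * τ ^ (-γ) =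
        s ^ (-γ) * (1 - τ ^ (-γ)) by ring, Real.mul_rpow hsγ.le h1, ← mul_assoc,
        ← Real.rpow_add hsγ]
      simp
    · rw [Set.indicator_of_notMem h, Set.indicator_of_notMem (fun h' => h (hiff.1 h'))]

/-- The weight that multiplies `|u x| ^ p` when `x` is the outer point of the pair, integrated over
the `y` with `‖y‖ < ρ ‖x‖`. The choice of `γ` enters here, through `p γ = 2n - N`. -/
theorem lintegral_inner_kernel (n : ℕ) (hn : 2 ≤ n) (N γ p : ℝ) {ρ : ℝ} (hρ : ρ ∈ Set.Ioo (0 : ℝ) 1)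
    (hγ : 0 < γ) (hpγ : p * γ = 2 * n - N) (x : EuclideanSpace ℝ (Fin n)) (hx : x ≠ 0) :
    ∫⁻ y, {r : ℝ | r < ρ * ‖x‖}.indicator (fun r => ENNReal.ofReal
        ((‖x‖ ^ (-γ)) ^ (1 - p) * (r ^ (-γ) - ‖x‖ ^ (-γ)) ^ (p - 1))) ‖y‖ *
        ENNReal.ofReal (‖x - y‖ ^ (-N)) =
      ENNReal.ofReal (‖x‖ ^ ((n : ℝ) - N)) * ∫⁻ τ in Set.Ioo (0 : ℝ) ρ,
        ENNReal.ofReal (τ ^ (N - n - 1 + γ) * (1 - τ ^ γ) ^ (p - 1)) * sphereKernel n N τ := by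
  have hs : 0 < ‖x‖ := norm_pos_iff.2 hx
  set s := ‖x‖
  rw [lintegral_radial_mul_kernel n hn N x hx _ ((Set.Iio ρ).indicator
    fun τ => ENNReal.ofReal ((τ ^ (-γ) - 1) ^ (p - 1)))]
  · congr 1
    have : ∀ τ : ℝ, ENNReal.ofReal (τ ^ (n - 1)) * (Set.Iio ρ).indicator
        (fun τ => ENNReal.ofReal ((τ ^ (-γ) - 1) ^ (p - 1))) τ * sphereKernel n N τ =
        (Set.Iio ρ).indicator (fun τ => ENNReal.ofReal (τ ^ (n - 1)) *
          ENNReal.ofReal ((τ ^ (-γ) - 1) ^ (p - 1)) * sphereKernel n N τ) τ := by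
      intro τ
      by_cases h : τ ∈ Set.Iio ρ <;> simp [h]
    simp_rw [this]
    rw [setLIntegral_indicator measurableSet_Iio, Set.inter_comm, Set.Ioi_inter_Iio]
    refine setLIntegral_congr_fun measurableSet_Ioo fun τ hτ => ?_
    have hτ0 := hτ.1
    have h1 : (0 : ℝ) ≤ 1 - τ ^ γ :=
      sub_nonneg.2 (Real.rpow_le_one hτ0.le (hτ.2.trans hρ.2).le hγ.le)
    rw [← ENNReal.ofReal_mul (by positivity)]
    congr 2
    have hn' : ((n - 1 : ℕ) : ℝ) = n - 1 := by push_cast [Nat.cast_sub (by omega : 1 ≤ n)]; ring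
    rw [show τ ^ (-γ) - 1 = τ ^ (-γ) * (1 - τ ^ γ) by
      rw [mul_sub, ← Real.rpow_add hτ0]; simp, Real.mul_rpow (by positivity) h1,
      ← Real.rpow_mul hτ0.le, ← mul_assoc, ← Real.rpow_natCast, ← Real.rpow_add hτ0, hn']
    congr 2
    linarith
  · exact Measurable.indicator (by fun_prop) (measurableSet_lt (by fun_prop) (by fun_prop))
  · intro τ hτ
    have hiff : s * τ ∈ {r : ℝ | r < ρ * s} ↔ τ ∈ Set.Iio ρ := by
      change s * τ < ρ * s ↔ τ < ρ
      constructor <;> intro h <;> nlinarith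
    by_cases h : τ ∈ Set.Iio ρ
    · rw [Set.indicator_of_mem h, Set.indicator_of_mem (hiff.2 h)]
      congr 1
      have hτ1 : τ ≤ 1 := le_trans (le_of_lt h) hρ.2.le
      have h1 : 0 ≤ τ ^ (-γ) - 1 :=
        sub_nonneg.2 (Real.one_le_rpow_of_pos_of_le_one_of_nonpos hτ hτ1 (by linarith))
      have hsγ : 0 < s ^ (-γ) := Real.rpow_pos_of_pos hs _
      rw [Real.mul_rpow hs.le hτ.le, show s ^ (-γ) * τ ^ (-γ) - s ^ (-γ) =
        s ^ (-γ) * (τ ^ (-γ) - 1) by ring, Real.mul_rpow hsγ.le h1, ← mul_assoc,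
        ← Real.rpow_add hsγ]
      simp
    · rw [Set.indicator_of_notMem h, Set.indicator_of_notMem (fun h' => h (hiff.1 h'))]

/-- Finiteness, which allows a subtraction later: `τ ≤ ρ < 1` keeps away from the singularity of
the kernel at `τ = 1`. -/
theorem inner_const_lt_top (n : ℕ) (hn : 2 ≤ n) {N γ p ρ : ℝ} (hρ : ρ ∈ Set.Ioo (0 : ℝ) 1)
    (hN : (n : ℝ) < N) (hγ : 0 < γ) (hp : 1 ≤ p) :
    ∫⁻ τ in Set.Ioo (0 : ℝ) ρ, ENNReal.ofReal (τ ^ (N - n - 1 + γ) * (1 - τ ^ γ) ^ (p - 1)) *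
      sphereKernel n N τ < ⊤ := by
  have hN0 : 0 ≤ N := le_trans (Nat.cast_nonneg n) hN.le
  set c := ENNReal.ofReal (sphereSurfaceArea (n - 1)) *
      ((∫⁻ t in Set.Ioo (-1 : ℝ) 1, ENNReal.ofReal ((1 - t ^ 2) ^ (((n : ℝ) - 3) / 2))) *
        ENNReal.ofReal (((1 - ρ) ^ 2) ^ (-(N / 2)))) with hc
  have hctop : c ≠ ⊤ := ENNReal.mul_ne_top ENNReal.ofReal_ne_top
    (ENNReal.mul_ne_top (lintegral_sphere_weight_lt_top n hn).ne ENNReal.ofReal_ne_top)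
  have hint : IntegrableOn (fun τ : ℝ => τ ^ (N - n - 1 + γ)) (Set.Ioo 0 ρ) := by
    rw [intervalIntegral.integrableOn_Ioo_rpow_iff hρ.1]
    linarith
  calc _ ≤ ∫⁻ τ in Set.Ioo (0 : ℝ) ρ, ENNReal.ofReal (τ ^ (N - n - 1 + γ)) * c := by
        refine setLIntegral_mono' measurableSet_Ioo fun τ hτ => ?_
        have hγ0 : 0 ≤ τ ^ γ := Real.rpow_nonneg hτ.1.le _
        have h1 : (0 : ℝ) ≤ 1 - τ ^ γ :=
          sub_nonneg.2 (Real.rpow_le_one hτ.1.le (hτ.2.trans hρ.2).le hγ.le)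
        refine mul_le_mul' (ENNReal.ofReal_le_ofReal ?_) (sphereKernel_le n hN0 hρ.2 hτ)
        exact mul_le_of_le_one_right (Real.rpow_nonneg hτ.1.le _)
          (Real.rpow_le_one h1 (by linarith) (by linarith))
    _ = (∫⁻ τ in Set.Ioo (0 : ℝ) ρ, ENNReal.ofReal (τ ^ (N - n - 1 + γ))) * c :=
        lintegral_mul_const' _ _ hctop
    _ < ⊤ := ENNReal.mul_lt_top hint.setLIntegral_lt_top hctop.lt_top

/-- The two constants differ by the truncated Hardy constant, as
`(1 - τ^γ)^(p-1) = τ^γ (1 - τ^γ)^(p-1) + (1 - τ^γ)^p`. -/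
theorem outer_const_eq (n : ℕ) {N γ p ρ : ℝ} (hρ : ρ ∈ Set.Ioo (0 : ℝ) 1) (hγ : 0 < γ) :
    ∫⁻ τ in Set.Ioo (0 : ℝ) ρ, ENNReal.ofReal (τ ^ (N - n - 1) * (1 - τ ^ γ) ^ (p - 1)) *
        sphereKernel n N τ =
      (∫⁻ τ in Set.Ioo (0 : ℝ) ρ, ENNReal.ofReal (τ ^ (N - n - 1 + γ) * (1 - τ ^ γ) ^ (p - 1)) *
        sphereKernel n N τ) +
      ∫⁻ τ in Set.Ioo (0 : ℝ) ρ, ENNReal.ofReal (τ ^ (N - n - 1) * (1 - τ ^ γ) ^ p) *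
        sphereKernel n N τ := by
  have hm := measurable_sphereKernel n N
  rw [← lintegral_add_left (by fun_prop)]
  refine setLIntegral_congr_fun measurableSet_Ioo fun τ hτ => ?_
  have h1 : (0 : ℝ) < 1 - τ ^ γ :=
    sub_pos.2 (Real.rpow_lt_one hτ.1.le (hτ.2.trans hρ.2) hγ)
  have h0 := hτ.1
  rw [← add_mul, ← ENNReal.ofReal_add (by positivity) (by positivity), Real.rpow_add h0]
  congr 2
  rw [show (1 - τ ^ γ) ^ p = (1 - τ ^ γ) ^ (p - 1) * (1 - τ ^ γ) by
    nth_rewrite 3 [← Real.rpow_one (1 - τ ^ γ)]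
    rw [← Real.rpow_add h1]; simp]
  ring

/-! ### The truncated inequality and its limit -/

/-- A form of Tonelli's theorem: a double integral dominates twice the double integral of `F` as
soon as its integrand dominates the symmetrization of `F`. -/
theorem two_mul_lintegral_le_of_symm {X : Type*} [MeasurableSpace X] (μ : Measure X) [SFinite μ]
    (F G : X → X → ENNReal) (hF : Measurable (Function.uncurry F))
    (h : ∀ x y, F x y + F y x ≤ G x y) :
    2 * ∫⁻ x, ∫⁻ y, F x y ∂μ ∂μ ≤ ∫⁻ x, ∫⁻ y, G x y ∂μ ∂μ := by
  rw [two_mul]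
  nth_rewrite 2 [lintegral_lintegral_swap hF.aemeasurable]
  have hF' : Measurable fun x => ∫⁻ y, F x y ∂μ := hF.lintegral_prod_right'
  rw [← lintegral_add_left hF']
  refine lintegral_mono fun x => ?_
  rw [← lintegral_add_left hF.of_uncurry_left]
  exact lintegral_mono fun y => h x y

theorem lintegral_lintegral_le_add {X : Type*} [MeasurableSpace X] (μ : Measure X) [SFinite μ]
    (A F B : X → X → ENNReal) (hB : Measurable (Function.uncurry B))
    (h : ∀ᵐ x ∂μ, ∀ y, A x y ≤ F x y + B x y) :
    ∫⁻ x, ∫⁻ y, A x y ∂μ ∂μ ≤ (∫⁻ x, ∫⁻ y, F x y ∂μ ∂μ) + ∫⁻ x, ∫⁻ y, B x y ∂μ ∂μ := by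
  have hB' : Measurable fun x => ∫⁻ y, B x y ∂μ := hB.lintegral_prod_right'
  rw [← lintegral_add_right _ hB']
  refine lintegral_mono_ae (h.mono fun x hx => ?_)
  rw [← lintegral_add_right _ hB.of_uncurry_left]
  exact lintegral_mono hx

/-- The region `‖x‖ < ρ ‖y‖` and its reflection are disjoint, so a symmetric integrand has at least
twice the mass of one of them. -/
theorem two_mul_lintegral_cone_le {n : ℕ} {ρ : ℝ} (hρ : ρ ∈ Set.Ioo (0 : ℝ) 1)
    (f : EuclideanSpace ℝ (Fin n) → EuclideanSpace ℝ (Fin n) → ENNReal)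
    (hf : Measurable (Function.uncurry f)) (hsymm : ∀ x y, f x y = f y x) :
    2 * ∫⁻ x, ∫⁻ y, {y | ‖x‖ < ρ * ‖y‖}.indicator (f x) y ≤ ∫⁻ x, ∫⁻ y, f x y := by
  have hS : MeasurableSet {q : EuclideanSpace ℝ (Fin n) × EuclideanSpace ℝ (Fin n) |
      ‖q.1‖ < ρ * ‖q.2‖} := measurableSet_lt (by fun_prop) (by fun_prop)
  refine two_mul_lintegral_le_of_symm volume
    (fun x y => {y | ‖x‖ < ρ * ‖y‖}.indicator (f x) y) f (hf.indicator hS) fun x y => ?_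
  by_cases h : ‖x‖ < ρ * ‖y‖
  · have h' : ¬ ‖y‖ < ρ * ‖x‖ := by
      intro h'
      nlinarith [norm_nonneg x, norm_nonneg y, hρ.1, hρ.2]
    simp [Set.indicator, h, h']
  · simp only [Set.indicator, Set.mem_ofPred_eq, h, if_false, zero_add]
    split_ifs
    · rw [hsymm]
    · exact zero_le

/-- The singularity `‖x‖ ^ (-a)` is locally integrable for `a < n`. -/
theorem lintegral_weighted_lt_top (n : ℕ) (hn : 2 ≤ n) {a p : ℝ} (hp : 0 < p) (ha : a < n)
    (u : EuclideanSpace ℝ (Fin n) → ℝ) (hu : Continuous u) (hsupp : HasCompactSupport u) :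
    ∫⁻ x, ENNReal.ofReal (|u x| ^ p / ‖x‖ ^ a) < ⊤ := by
  obtain ⟨C, hC⟩ := hsupp.exists_bound_of_continuous hu
  obtain ⟨R, hR⟩ := hsupp.isCompact.isBounded.subset_ball 0
  have hum : Measurable u := hu.measurable
  have hint : IntegrableOn (fun x => |u x| ^ p / ‖x‖ ^ a) (Metric.ball 0 R) := by
    refine integrableOn_ball_of_norm_le_rpow (C := C ^ p) (α := a) ?_ ?_ ?_ ?_
    · rw [finrank_euclideanSpace_fin]
      omega
    · rwa [finrank_euclideanSpace_fin]
    · refine Eventually.of_forall fun x => ?_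
      have h := hC x
      rw [Real.norm_eq_abs] at h
      rw [Real.norm_of_nonneg (by positivity), Real.rpow_neg (norm_nonneg x), div_eq_mul_inv]
      gcongr
    · exact (by fun_prop : Measurable fun x => |u x| ^ p / ‖x‖ ^ a).aestronglyMeasurable
  rw [integrableOn_iff_integrable_of_support_subset] at hint
  · exact hint.lintegral_lt_top
  · intro x hx
    refine hR (subset_tsupport u ?_)
    intro h0
    simp [h0, Real.zero_rpow hp.ne'] at hx

/-- The Hardy inequality restricted to pairs with `‖x‖ < ρ ‖y‖`, with the constant truncated to
`(0, ρ)`. The truncation is homogeneous, so the ground-state weights still integrate to constants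
times `‖x‖ ^ (n - N)`. -/
theorem hardy_cone (n : ℕ) (hn : 2 ≤ n) (N γ p : ℝ) {ρ : ℝ} (hρ : ρ ∈ Set.Ioo (0 : ℝ) 1)
    (hN : (n : ℝ) < N) (hγ : 0 < γ) (hp : 1 ≤ p) (hpγ : p * γ = 2 * n - N)
    (u : EuclideanSpace ℝ (Fin n) → ℝ) (hu : Continuous u) (hsupp : HasCompactSupport u) :
    (∫⁻ τ in Set.Ioo (0 : ℝ) ρ, ENNReal.ofReal (τ ^ (N - n - 1) * (1 - τ ^ γ) ^ p) *
        sphereKernel n N τ) * ∫⁻ x, ENNReal.ofReal (|u x| ^ p / ‖x‖ ^ (N - n)) ≤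
      ∫⁻ x, ∫⁻ y, {y | ‖x‖ < ρ * ‖y‖}.indicator
        (fun y => ENNReal.ofReal (|u x - u y| ^ p / ‖x - y‖ ^ N)) y := by
  have : Nonempty (Fin n) := ⟨⟨0, by omega⟩⟩
  have hpγ0 : 0 < p * γ := by positivity
  have hM := lintegral_weighted_lt_top n hn (a := N - n) (p := p) (by linarith) (by linarith) u hu
    hsupp
  have hb := inner_const_lt_top n hn hρ hN hγ hp
  have hab := outer_const_eq n (N := N) (p := p) hρ hγ
  have hA := fun x hx => lintegral_outer_kernel n hn N γ p hρ hγ x hx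
  have hB := fun x hx => lintegral_inner_kernel n hn N γ p hρ hγ hpγ x hx
  set a := ∫⁻ τ in Set.Ioo (0 : ℝ) ρ, ENNReal.ofReal (τ ^ (N - n - 1) * (1 - τ ^ γ) ^ (p - 1)) *
        sphereKernel n N τ
  set b := ∫⁻ τ in Set.Ioo (0 : ℝ) ρ, ENNReal.ofReal (τ ^ (N - n - 1 + γ) *
    (1 - τ ^ γ) ^ (p - 1)) * sphereKernel n N τ
  set c := ∫⁻ τ in Set.Ioo (0 : ℝ) ρ, ENNReal.ofReal (τ ^ (N - n - 1) * (1 - τ ^ γ) ^ p) *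
        sphereKernel n N τ
  set M := ∫⁻ x, ENNReal.ofReal (|u x| ^ p / ‖x‖ ^ (N - n)) with hMdef
  have hum : Measurable u := hu.measurable
  -- `GA x y` weighs the inner point `x`, and `GB y x` the outer point `y`, of a pair with
  -- `‖x‖ < ρ ‖y‖`.
  let GA : EuclideanSpace ℝ (Fin n) → EuclideanSpace ℝ (Fin n) → ENNReal := fun x y =>
    {r : ℝ | ‖x‖ < ρ * r}.indicator (fun r => ENNReal.ofReal
        ((‖x‖ ^ (-γ)) ^ (1 - p) * (‖x‖ ^ (-γ) - r ^ (-γ)) ^ (p - 1))) ‖y‖ *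
        ENNReal.ofReal (‖x - y‖ ^ (-N))
  let GB : EuclideanSpace ℝ (Fin n) → EuclideanSpace ℝ (Fin n) → ENNReal := fun y x =>
    {r : ℝ | r < ρ * ‖y‖}.indicator (fun r => ENNReal.ofReal
        ((‖y‖ ^ (-γ)) ^ (1 - p) * (r ^ (-γ) - ‖y‖ ^ (-γ)) ^ (p - 1))) ‖x‖ *
        ENNReal.ofReal (‖y - x‖ ^ (-N))
  have hae : ∀ᵐ x : EuclideanSpace ℝ (Fin n), x ≠ 0 := by
    have : Nontrivial (EuclideanSpace ℝ (Fin n)) := inferInstance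
    exact Measure.ae_ne volume 0
  have hwt : ∀ x : EuclideanSpace ℝ (Fin n), x ≠ 0 → ENNReal.ofReal (|u x| ^ p) *
      ENNReal.ofReal (‖x‖ ^ ((n : ℝ) - N)) = ENNReal.ofReal (|u x| ^ p / ‖x‖ ^ (N - n)) := by
    intro x hx
    rw [← ENNReal.ofReal_mul (by positivity), show (n : ℝ) - N = -(N - n) by ring,
      Real.rpow_neg (norm_nonneg x), div_eq_mul_inv]
  have hGBm : Measurable (Function.uncurry fun y x => ENNReal.ofReal (|u y| ^ p) * GB y x) := by
    have h1 : MeasurableSet {q : EuclideanSpace ℝ (Fin n) × EuclideanSpace ℝ (Fin n) |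
      ‖q.2‖ < ρ * ‖q.1‖} := measurableSet_lt (by fun_prop) (by fun_prop)
    have h2 : Measurable fun q : EuclideanSpace ℝ (Fin n) × EuclideanSpace ℝ (Fin n) =>
      {q : EuclideanSpace ℝ (Fin n) × EuclideanSpace ℝ (Fin n) | ‖q.2‖ < ρ * ‖q.1‖}.indicator
        (fun q => ENNReal.ofReal
        ((‖q.1‖ ^ (-γ)) ^ (1 - p) * (‖q.2‖ ^ (-γ) - ‖q.1‖ ^ (-γ)) ^ (p - 1))) q *
        ENNReal.ofReal (‖q.1 - q.2‖ ^ (-N)) :=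
      (Measurable.indicator (by fun_prop) h1).mul (by fun_prop)
    exact Measurable.mul (by fun_prop) h2
  have hintA : ∫⁻ x, ∫⁻ y, ENNReal.ofReal (|u x| ^ p) * GA x y = a * M := by
    rw [hMdef, mul_comm, ← lintegral_mul_const _ (by fun_prop)]
    refine lintegral_congr_ae (hae.mono fun x hx => ?_)
    simp only
    rw [lintegral_const_mul' _ _ ENNReal.ofReal_ne_top, hA x hx, ← mul_assoc, hwt x hx]
  have hintB : ∫⁻ x, ∫⁻ y, ENNReal.ofReal (|u y| ^ p) * GB y x = b * M := by
    rw [← lintegral_lintegral_swap hGBm.aemeasurable, hMdef, mul_comm,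
      ← lintegral_mul_const _ (by fun_prop)]
    refine lintegral_congr_ae (hae.mono fun x hx => ?_)
    simp only
    rw [lintegral_const_mul' _ _ ENNReal.ofReal_ne_top, hB x hx, ← mul_assoc, hwt x hx]
  have hpt : ∀ x : EuclideanSpace ℝ (Fin n), x ≠ 0 → ∀ y, ENNReal.ofReal (|u x| ^ p) * GA x y ≤
      {y | ‖x‖ < ρ * ‖y‖}.indicator
        (fun y => ENNReal.ofReal (|u x - u y| ^ p / ‖x - y‖ ^ N)) y +
      ENNReal.ofReal (|u y| ^ p) * GB y x := by
    intro x hx y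
    simp only [GA, GB]
    by_cases h : ‖x‖ < ρ * ‖y‖
    · have hx0 : 0 < ‖x‖ := norm_pos_iff.2 hx
      have hxy : ‖x‖ < ‖y‖ := by nlinarith [norm_nonneg y, hρ.1, hρ.2]
      have hy0 : 0 < ‖y‖ := hx0.trans hxy
      have hω : ‖y‖ ^ (-γ) < ‖x‖ ^ (-γ) := Real.rpow_lt_rpow_of_neg hx0 hxy (by linarith)
      have hωy : 0 < ‖y‖ ^ (-γ) := Real.rpow_pos_of_pos hy0 _
      have key := rpow_ground_state_ineq hp hωy hω (abs_nonneg (u x)) (abs_nonneg (u y))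
        (abs_nonneg (u x - u y)) (by linarith [abs_sub_abs_le_abs_sub (u x) (u y)])
      have hd : 0 ≤ (‖x‖ ^ (-γ) - ‖y‖ ^ (-γ)) ^ (p - 1) := Real.rpow_nonneg (by linarith) _
      rw [Set.indicator_of_mem (show ‖y‖ ∈ {r : ℝ | ‖x‖ < ρ * r} from h),
        Set.indicator_of_mem (show y ∈ {y | ‖x‖ < ρ * ‖y‖} from h),
        Set.indicator_of_mem (show ‖x‖ ∈ {r : ℝ | r < ρ * ‖y‖} from h), norm_sub_rev y x,
        div_eq_mul_inv, ← Real.rpow_neg (norm_nonneg _),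
        ENNReal.ofReal_mul (p := |u x - u y| ^ p) (by positivity), ← mul_assoc, ← mul_assoc,
        ← add_mul, ← ENNReal.ofReal_mul (p := |u x| ^ p) (by positivity),
        ← ENNReal.ofReal_mul (p := |u y| ^ p) (by positivity),
        ← ENNReal.ofReal_add (by positivity) (by positivity)]
      exact mul_le_mul' (ENNReal.ofReal_le_ofReal key) le_rfl
    · rw [Set.indicator_of_notMem (show ‖y‖ ∉ {r : ℝ | ‖x‖ < ρ * r} from h)]
      simp
  have hmain : a * M ≤ (∫⁻ x, ∫⁻ y, {y | ‖x‖ < ρ * ‖y‖}.indicator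
        (fun y => ENNReal.ofReal (|u x - u y| ^ p / ‖x - y‖ ^ N)) y) + b * M := by
    rw [← hintA, ← hintB]
    refine lintegral_lintegral_le_add volume (fun x y => ENNReal.ofReal (|u x| ^ p) * GA x y) _
      (fun x y => ENNReal.ofReal (|u y| ^ p) * GB y x) (hGBm.comp measurable_swap) (hae.mono hpt)
  rw [hab, add_mul, add_comm (b * M)] at hmain
  -- `a = b + c`, and the finite quantity `b * M` cancels.
  exact (ENNReal.add_le_add_iff_right (ENNReal.mul_ne_top hb.ne hM.ne)).1 hmain

/-- Monotone convergence along `ρ → 1`. -/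
theorem lintegral_Ioo_le_of_forall_lt_one (f : ℝ → ENNReal)
    (K : ENNReal) (M : ENNReal) (h : ∀ ρ ∈ Set.Ioo (0 : ℝ) 1, (∫⁻ τ in Set.Ioo 0 ρ, f τ) * M ≤ K) :
    (∫⁻ τ in Set.Ioo 0 1, f τ) * M ≤ K := by
  have hU : Set.Ioo (0 : ℝ) 1 = ⋃ k : ℕ, Set.Ioo (0 : ℝ) (1 - 1 / ((k : ℝ) + 2)) := by
    ext τ
    simp only [Set.mem_Ioo, Set.mem_iUnion]
    constructor
    · rintro ⟨h0, h1⟩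
      obtain ⟨k, hk⟩ := exists_nat_one_div_lt (sub_pos.2 h1)
      refine ⟨k, h0, ?_⟩
      have : 1 / ((k : ℝ) + 2) ≤ 1 / ((k : ℝ) + 1) := by gcongr; norm_num
      linarith
    · rintro ⟨k, h0, h1⟩
      have : 0 < 1 / ((k : ℝ) + 2) := by positivity
      exact ⟨h0, by linarith⟩
  rw [hU, setLIntegral_iUnion_of_directed, ENNReal.iSup_mul]
  · refine iSup_le fun k => h _ ⟨?_, ?_⟩
    · have : 1 / ((k : ℝ) + 2) < 1 := by
        rw [div_lt_one (by positivity)]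
        linarith [Nat.cast_nonneg (α := ℝ) k]
      linarith
    · have : 0 < 1 / ((k : ℝ) + 2) := by positivity
      linarith
  · refine Monotone.directed_le fun i j hij => Set.Ioo_subset_Ioo_right ?_
    have : (i : ℝ) ≤ j := by exact_mod_cast hij
    gcongr

/-- Sharp fractional Hardy inequality: for `n ≥ 2`, `α ∈ (0,1)`, `1 ≤ p < n/α` and every
`u ∈ C_c^∞(ℝⁿ)`,
`∫∫ |u(x)−u(y)|^p / |x−y|^{n+pα} dx dy ≥ C_{n,α,p} ∫ |u(x)|^p / |x|^{pα} dx`. -/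
theorem fractional_hardy_inequality (n : ℕ) (hn : 2 ≤ n) (α p : ℝ)
    (hα : α ∈ Set.Ioo (0 : ℝ) 1) (hp : 1 ≤ p) (hpn : p < n / α)
    (u : EuclideanSpace ℝ (Fin n) → ℝ) (hu : ContDiff ℝ (⊤ : ℕ∞) u) (hsupp : HasCompactSupport u) :
    ENNReal.ofReal (hardyConst n α p) *
        ∫⁻ x, ENNReal.ofReal (|u x| ^ p / ‖x‖ ^ (p * α)) ≤
      ∫⁻ x, ∫⁻ y, ENNReal.ofReal (|u x - u y| ^ p / ‖x - y‖ ^ ((n : ℝ) + p * α)) := by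
  have hp0 : 0 < p := by linarith
  have hpα : 0 < p * α := mul_pos hp0 hα.1
  have hpn' : p * α < n := (lt_div_iff₀ hα.1).1 hpn
  have hγ : 0 < ((n : ℝ) - p * α) / p := div_pos (by linarith) hp0
  have hum : Measurable u := hu.continuous.measurable
  -- `γ = (n - pα) / p` is the exponent for which `‖x‖ ^ (-γ)` is the virtual ground state.
  have hpγ : p * (((n : ℝ) - p * α) / p) = 2 * n - (n + p * α) := by
    field_simp
    ring
  refine (mul_le_mul' (ofReal_hardyConst_le n α p hγ.le) le_rfl).trans ?_
  rw [mul_comm (2 : ENNReal), mul_assoc]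
  refine lintegral_Ioo_le_of_forall_lt_one _ _ _ fun ρ hρ => ?_
  have hcone := hardy_cone n hn (n + p * α) _ p hρ (by linarith) hγ hp hpγ u hu.continuous hsupp
  rw [add_sub_cancel_left] at hcone
  rw [mul_left_comm]
  refine (mul_le_mul' le_rfl hcone).trans (two_mul_lintegral_cone_le hρ
    (fun x y => ENNReal.ofReal (|u x - u y| ^ p / ‖x - y‖ ^ ((n : ℝ) + p * α))) ?_ ?_)
  · change Measurable fun q : EuclideanSpace ℝ (Fin n) × EuclideanSpace ℝ (Fin n) =>
      ENNReal.ofReal (|u q.1 - u q.2| ^ p / ‖q.1 - q.2‖ ^ ((n : ℝ) + p * α))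
    fun_prop
  · intro x y
    rw [abs_sub_comm, norm_sub_rev]
end

section
/- Let n ≥ 2, p ≥ 1, α ∈ (0,1) with pα < n. Then the function r ↦ r^{pα−1} |1 − r^{(n−pα)/p}|^p Φ_{n,α,p}(r) is integrable on (0,1), and the constant C_{n,α,p} := 2 ∫_0^1 r^{pα−1} |1 − r^{(n−pα)/p}|^p Φ_{n,α,p}(r) dr satisfies 0 < C_{n,α,p} < ∞. -/
/-!
Write `s = p * α`. The kernel `D = 1 - 2 * r * t + r ^ 2` is equal both to `(r - t) ^ 2 + (1 - t ^ 2)`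
and to `(1 - r) ^ 2 + 2 * r * (1 - t)`, hence it dominates `1 - t ^ 2` and `(1 - r) ^ 2`. Splitting
the exponent `(n + s) / 2` as `a + b` therefore separates the variables:
`D ^ (-(a + b)) ≤ (1 - t ^ 2) ^ (-a) * (1 - r) ^ (-2 * b)`.

Choose `2 * a = n - 1 - ε` with `ε > 0` small. In `t` this leaves `(1 - t ^ 2) ^ (ε / 2 - 1)`, which
is integrable on `(-1, 1)`, so `Phi n α p r ≤ K * (1 - r) ^ (-(s + 1 + ε))`. Since
`|1 - r ^ γ| ≤ C * (1 - r)`, the integrand of the Hardy constant is bounded by a multiple of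
`r ^ (s - 1) * (1 - r) ^ ((p - s - ε) - 1)`. As `p - s = p * (1 - α) > 0`, taking `ε < p - s` makes
this a convergent Beta integrand. Positivity holds because the integrand is positive on `(0, 1)`,
where the integral defining `Phi` converges.
-/

open MeasureTheory Filter

/-- Convergence of the real Beta integral. -/
lemma intervalIntegrable_rpow_mul_one_sub_rpow {u v : ℝ} (hu : 0 < u) (hv : 0 < v) :
    IntervalIntegrable (fun x : ℝ => x ^ (u - 1) * (1 - x) ^ (v - 1)) volume 0 1 := by
  have h := (Complex.betaIntegral_convergent (u := (u : ℂ)) (v := (v : ℂ))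
    (by simpa using hu) (by simpa using hv)).norm
  rw [intervalIntegrable_iff_integrableOn_Ioo_of_le zero_le_one] at h ⊢
  refine h.congr_fun (fun x hx => ?_) measurableSet_Ioo
  have h1 : (1 - (x : ℂ)) = ((1 - x : ℝ) : ℂ) := by push_cast; ring
  simp only [norm_mul]
  rw [h1, Complex.norm_cpow_eq_rpow_re_of_pos hx.1,
    Complex.norm_cpow_eq_rpow_re_of_pos (sub_pos.2 hx.2)]
  simp

lemma integrableOn_one_sub_sq_rpow {δ : ℝ} (hδ : 0 < δ) :
    IntegrableOn (fun t : ℝ => (1 - t ^ 2) ^ (δ - 1)) (Set.Ioo (-1) 1) volume := by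
  -- the substitution `u = (1 + t) / 2` turns this into the Beta integrand
  have h := (((intervalIntegrable_rpow_mul_one_sub_rpow hδ hδ).comp_mul_left
    (c := 1 / 2)).comp_add_right 1).const_mul ((4 : ℝ) ^ (δ - 1))
  norm_num at h
  rw [intervalIntegrable_iff_integrableOn_Ioo_of_le (by norm_num)] at h
  refine h.congr_fun (fun t ht => ?_) measurableSet_Ioo
  obtain ⟨h1, h2⟩ := ht
  simp only
  rw [← Real.mul_rpow (by linarith) (by linarith), ← Real.mul_rpow (by norm_num) (by nlinarith)]
  congr 1
  ring

lemma abs_one_sub_rpow_le {γ r : ℝ} (hγ : 0 < γ) (h0 : 0 < r) (h1 : r < 1) :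
    |1 - r ^ γ| ≤ max 1 γ * (1 - r) := by
  have hle : r ^ γ ≤ 1 := Real.rpow_le_one h0.le h1.le hγ.le
  rw [abs_of_nonneg (by linarith)]
  rcases le_total 1 γ with h | h
  · rw [max_eq_right h]
    have := one_add_mul_self_le_rpow_one_add (s := r - 1) (by linarith) h
    rw [add_sub_cancel] at this
    linarith
  · rw [max_eq_left h]
    have := Real.rpow_le_rpow_of_exponent_ge h0 h1.le h
    rw [Real.rpow_one] at this
    linarith

lemma one_sub_sq_le_kernel (r t : ℝ) : 1 - t ^ 2 ≤ 1 - 2 * r * t + r ^ 2 := by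
  nlinarith [sq_nonneg (r - t)]

lemma kernel_rpow_le {a b r t : ℝ} (ha : 0 ≤ a) (hb : 0 ≤ b) (hr0 : 0 < r) (hr1 : r < 1)
    (ht : t ∈ Set.Ioo (-1 : ℝ) 1) :
    (1 - 2 * r * t + r ^ 2) ^ (-(a + b)) ≤ (1 - t ^ 2) ^ (-a) * (1 - r) ^ (-(2 * b)) := by
  obtain ⟨ht0, ht1⟩ := ht
  have hT : 0 < 1 - t ^ 2 := by nlinarith
  have hTD := one_sub_sq_le_kernel r t
  have hRD : (1 - r) ^ 2 ≤ 1 - 2 * r * t + r ^ 2 := by nlinarith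
  have hR : 0 < (1 - r) ^ 2 := pow_pos (sub_pos.2 hr1) 2
  have e : (1 - r) ^ (-(2 * b)) = ((1 - r) ^ 2) ^ (-b) := by
    rw [← Real.rpow_natCast, ← Real.rpow_mul (sub_pos.2 hr1).le]
    congr 1
    push_cast
    ring
  rw [e, neg_add, Real.rpow_add (hT.trans_le hTD)]
  exact mul_le_mul (Real.rpow_le_rpow_of_nonpos hT hTD (by linarith))
    (Real.rpow_le_rpow_of_nonpos hR hRD (by linarith)) (Real.rpow_nonneg (by linarith) _)
    (Real.rpow_nonneg hT.le _)

lemma sphereSurfaceArea_pos {m : ℕ} (hm : 0 < m) : 0 < sphereSurfaceArea m := by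
  have : (0 : ℝ) < m := by exact_mod_cast hm
  have := Real.Gamma_pos_of_pos (s := (m : ℝ) / 2) (by positivity)
  unfold sphereSurfaceArea
  positivity

lemma measurable_Phi (n : ℕ) (α p : ℝ) : Measurable (Phi n α p) := by
  unfold Phi
  refine Measurable.const_mul ?_ _
  simp_rw [intervalIntegral.integral_of_le (show (-1 : ℝ) ≤ 1 by norm_num)]
  refine (StronglyMeasurable.integral_prod_right (f := fun r t : ℝ =>
    (1 - t ^ 2) ^ (((n : ℝ) - 3) / 2) *
      (1 - 2 * r * t + r ^ 2) ^ (-(((n : ℝ) + p * α) / 2))) ?_).measurable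
  refine Measurable.stronglyMeasurable ?_
  simp only [Function.uncurry_def]
  fun_prop

/-- Separation of variables in the integrand of `Phi`: the exponent `(n + p * α) / 2` is split as
`(n - 1 - ε) / 2 + (p * α + 1 + ε) / 2`. -/
lemma Phi_integrand_le {n : ℕ} {α p ε r t : ℝ} (hn : 2 ≤ n) (hs : 0 ≤ p * α) (hε : 0 ≤ ε)
    (hε1 : ε ≤ 1) (hr0 : 0 < r) (hr1 : r < 1) (ht : t ∈ Set.Ioo (-1 : ℝ) 1) :
    (1 - t ^ 2) ^ (((n : ℝ) - 3) / 2) * (1 - 2 * r * t + r ^ 2) ^ (-(((n : ℝ) + p * α) / 2)) ≤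
      (1 - r) ^ (-(p * α + 1 + ε)) * (1 - t ^ 2) ^ (ε / 2 - 1) := by
  have hn' : (2 : ℝ) ≤ n := by exact_mod_cast hn
  have hT : 0 < 1 - t ^ 2 := by nlinarith [ht.1, ht.2]
  have h := kernel_rpow_le (a := (n - 1 - ε) / 2) (b := (p * α + 1 + ε) / 2)
    (by linarith) (by linarith) hr0 hr1 ht
  have e1 : ((n : ℝ) - 1 - ε) / 2 + (p * α + 1 + ε) / 2 = (n + p * α) / 2 := by ring
  have e2 : 2 * ((p * α + 1 + ε) / 2) = p * α + 1 + ε := by ring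
  rw [e1, e2] at h
  refine (mul_le_mul_of_nonneg_left h (Real.rpow_nonneg hT.le _)).trans_eq ?_
  rw [← mul_assoc, ← Real.rpow_add hT, mul_comm]
  congr 2
  ring

lemma Phi_integrand_pos {n : ℕ} {α p r t : ℝ} (ht : t ∈ Set.Ioo (-1 : ℝ) 1) :
    0 < (1 - t ^ 2) ^ (((n : ℝ) - 3) / 2) *
      (1 - 2 * r * t + r ^ 2) ^ (-(((n : ℝ) + p * α) / 2)) := by
  have hT : 0 < 1 - t ^ 2 := by nlinarith [ht.1, ht.2]
  exact mul_pos (Real.rpow_pos_of_pos hT _)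
    (Real.rpow_pos_of_pos (hT.trans_le (one_sub_sq_le_kernel r t)) _)

lemma Phi_integrand_integrableOn {n : ℕ} {α p r : ℝ} (hn : 2 ≤ n) (hs : 0 ≤ p * α)
    (hr0 : 0 < r) (hr1 : r < 1) :
    IntegrableOn (fun t : ℝ => (1 - t ^ 2) ^ (((n : ℝ) - 3) / 2) *
      (1 - 2 * r * t + r ^ 2) ^ (-(((n : ℝ) + p * α) / 2))) (Set.Ioo (-1) 1) volume := by
  refine Integrable.mono' ((integrableOn_one_sub_sq_rpow (δ := 1 / 2) (by norm_num)).const_mul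
    ((1 - r) ^ (-(p * α + 1 + 1)))) ?_ ?_
  · exact Measurable.aestronglyMeasurable (by fun_prop)
  · refine (ae_restrict_iff' measurableSet_Ioo).2 (Eventually.of_forall fun t ht => ?_)
    rw [Real.norm_of_nonneg (Phi_integrand_pos ht).le]
    exact Phi_integrand_le hn hs zero_le_one le_rfl hr0 hr1 ht

lemma Phi_pos {n : ℕ} {α p r : ℝ} (hn : 2 ≤ n) (hs : 0 ≤ p * α) (hr0 : 0 < r) (hr1 : r < 1) :
    0 < Phi n α p r :=
  mul_pos (sphereSurfaceArea_pos (by omega)) <|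
    intervalIntegral.intervalIntegral_pos_of_pos_on
      ((intervalIntegrable_iff_integrableOn_Ioo_of_le (by norm_num)).2
        (Phi_integrand_integrableOn hn hs hr0 hr1))
      (fun _ ht => Phi_integrand_pos ht) (by norm_num)

lemma Phi_le {n : ℕ} {α p ε : ℝ} (hn : 2 ≤ n) (hs : 0 ≤ p * α) (hε : 0 < ε) (hε1 : ε ≤ 1) :
    ∃ K : ℝ, 0 ≤ K ∧ ∀ r ∈ Set.Ioo (0 : ℝ) 1, Phi n α p r ≤ K * (1 - r) ^ (-(p * α + 1 + ε)) := by
  have hS := sphereSurfaceArea_pos (m := n - 1) (by omega)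
  refine ⟨sphereSurfaceArea (n - 1) * ∫ t in Set.Ioo (-1 : ℝ) 1, (1 - t ^ 2) ^ (ε / 2 - 1),
    mul_nonneg hS.le (setIntegral_nonneg measurableSet_Ioo fun t ht =>
      Real.rpow_nonneg (by nlinarith [ht.1, ht.2]) _), fun r hr => ?_⟩
  unfold Phi
  rw [mul_assoc]
  refine mul_le_mul_of_nonneg_left ?_ hS.le
  rw [intervalIntegral.integral_of_le (by norm_num), integral_Ioc_eq_integral_Ioo,
    mul_comm (∫ t in Set.Ioo (-1 : ℝ) 1, (1 - t ^ 2) ^ (ε / 2 - 1)), ← integral_const_mul]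
  exact setIntegral_mono_on (Phi_integrand_integrableOn hn hs hr.1 hr.2)
    ((integrableOn_one_sub_sq_rpow (half_pos hε)).const_mul _) measurableSet_Ioo
    fun t ht => Phi_integrand_le hn hs hε.le hε1 hr.1 hr.2 ht

/-- The defining integrand of `C_{n,α,p}` is integrable on `(0,1)` and the constant is
positive (and finite, being a real number). -/
theorem hardyConst_integrable_and_pos (n : ℕ) (hn : 2 ≤ n) (α p : ℝ)
    (hα : α ∈ Set.Ioo (0 : ℝ) 1) (hp : 1 ≤ p) (hpn : p * α < n) :
    IntegrableOn
        (fun r : ℝ => r ^ (p * α - 1) * |1 - r ^ (((n : ℝ) - p * α) / p)| ^ p * Phi n α p r)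
        (Set.Ioo 0 1) volume ∧
      0 < hardyConst n α p := by
  have hp0 : 0 < p := by linarith
  have hs : 0 < p * α := mul_pos hp0 hα.1
  have hsp : 0 < p - p * α := by nlinarith [hα.2]
  have hγ : 0 < ((n : ℝ) - p * α) / p := div_pos (by linarith) hp0
  have hpos : ∀ r ∈ Set.Ioo (0 : ℝ) 1,
      0 < r ^ (p * α - 1) * |1 - r ^ (((n : ℝ) - p * α) / p)| ^ p * Phi n α p r := by
    intro r hr
    have h1 : r ^ (((n : ℝ) - p * α) / p) < 1 := Real.rpow_lt_one hr.1.le hr.2 hγ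
    exact mul_pos (mul_pos (Real.rpow_pos_of_pos hr.1 _)
      (Real.rpow_pos_of_pos (abs_pos.2 (by linarith)) _)) (Phi_pos hn hs.le hr.1 hr.2)
  have hint : IntegrableOn
      (fun r : ℝ => r ^ (p * α - 1) * |1 - r ^ (((n : ℝ) - p * α) / p)| ^ p * Phi n α p r)
      (Set.Ioo 0 1) volume := by
    obtain ⟨ε, hε, hε'⟩ : ∃ ε, 0 < ε ∧ ε < min 1 (p - p * α) :=
      exists_between (lt_min one_pos hsp)
    obtain ⟨hε1, hε2⟩ := lt_min_iff.1 hε'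
    obtain ⟨K, hK, hPhi⟩ := Phi_le (n := n) hn hs.le hε hε1.le
    set γ := ((n : ℝ) - p * α) / p with hγ_def
    have hbeta := (intervalIntegrable_rpow_mul_one_sub_rpow (u := p * α) (v := p - p * α - ε)
      hs (by linarith)).const_mul ((max 1 γ) ^ p * K)
    rw [intervalIntegrable_iff_integrableOn_Ioo_of_le zero_le_one] at hbeta
    refine Integrable.mono' hbeta ?_ ?_
    · have := measurable_Phi n α p
      exact Measurable.aestronglyMeasurable (by fun_prop)
    · refine (ae_restrict_iff' measurableSet_Ioo).2 (Eventually.of_forall fun r hr => ?_)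
      rw [Real.norm_of_nonneg (hpos r hr).le]
      have hr1 : 0 < 1 - r := sub_pos.2 hr.2
      have hC : (0 : ℝ) ≤ max 1 γ := zero_le_one.trans (le_max_left _ _)
      have hA : |1 - r ^ γ| ^ p ≤ (max 1 γ) ^ p * (1 - r) ^ p := by
        rw [← Real.mul_rpow hC hr1.le]
        exact Real.rpow_le_rpow (abs_nonneg _) (abs_one_sub_rpow_le hγ hr.1 hr.2) hp0.le
      have hexp : (1 - r) ^ (p - p * α - ε - 1) = (1 - r) ^ p * (1 - r) ^ (-(p * α + 1 + ε)) := by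
        rw [← Real.rpow_add hr1]
        congr 1
        ring
      have hR := Real.rpow_nonneg hr.1.le (p * α - 1)
      calc r ^ (p * α - 1) * |1 - r ^ γ| ^ p * Phi n α p r
          ≤ r ^ (p * α - 1) * ((max 1 γ) ^ p * (1 - r) ^ p) *
              (K * (1 - r) ^ (-(p * α + 1 + ε))) := by
            refine mul_le_mul (mul_le_mul_of_nonneg_left hA hR) (hPhi r hr)
              (Phi_pos hn hs.le hr.1 hr.2).le ?_
            positivity
        _ = (max 1 γ) ^ p * K * (r ^ (p * α - 1) * (1 - r) ^ (p - p * α - ε - 1)) := by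
            rw [hexp]
            ring
  exact ⟨hint, mul_pos two_pos (intervalIntegral.intervalIntegral_pos_of_pos_on
    ((intervalIntegrable_iff_integrableOn_Ioo_of_le zero_le_one).2 hint) hpos zero_lt_one)⟩
end

section
/- Let p ∈ (1,∞). For all real numbers a, b ≥ 0 and c, d > 0, one has |c−d|^{p−2}(c−d) · (a^p/c^{p−1} − b^p/d^{p−1}) ≤ |a−b|^p. Equivalently, the discrete Picone quantity L := |a−b|^p − |c−d|^{p−2}(c−d)(a^p/c^{p−1} − b^p/d^{p−1}) is nonnegative. -/
/-!
The function `(x, s) ↦ x ^ p / s ^ (p - 1) = s * (x / s) ^ p` is the perspective of the convex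
function `t ↦ t ^ p`, hence subadditive (`picone_perspective_add_le`, Radon's inequality).
By symmetry assume `d < c`. Splitting `c = d + (c - d)` and `a ≤ b + |a - b|`, subadditivity gives
`a ^ p / c ^ (p - 1) ≤ b ^ p / d ^ (p - 1) + |a - b| ^ p / (c - d) ^ (p - 1)`,
and multiplying by `(c - d) ^ (p - 1)` yields the claim.
-/

lemma picone_mul_div_rpow (p : ℝ) {x s : ℝ} (hx : 0 ≤ x) (hs : 0 < s) :
    s * (x / s) ^ p = x ^ p / s ^ (p - 1) := by
  rw [Real.div_rpow hx hs.le, Real.rpow_sub_one hs.ne']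
  have := (Real.rpow_pos_of_pos hs p).ne'
  field_simp

/-- Radon's inequality for two terms, obtained from convexity of `t ↦ t ^ p` at the points
`x / s`, `y / t` with weights `s / (s + t)`, `t / (s + t)`. -/
lemma picone_perspective_add_le {p x y s t : ℝ} (hp : 1 ≤ p) (hx : 0 ≤ x) (hy : 0 ≤ y)
    (hs : 0 < s) (ht : 0 < t) :
    (x + y) ^ p / (s + t) ^ (p - 1) ≤ x ^ p / s ^ (p - 1) + y ^ p / t ^ (p - 1) := by
  have hst : 0 < s + t := add_pos hs ht
  rw [← picone_mul_div_rpow p (add_nonneg hx hy) hst, ← picone_mul_div_rpow p hx hs,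
    ← picone_mul_div_rpow p hy ht]
  have hxs : x / s ∈ Set.Ici (0 : ℝ) := div_nonneg hx hs.le
  have hyt : y / t ∈ Set.Ici (0 : ℝ) := div_nonneg hy ht.le
  have hw : s / (s + t) + t / (s + t) = 1 := by field_simp
  have h := (convexOn_rpow hp).2 hxs hyt (by positivity) (by positivity) hw
  simp only [smul_eq_mul] at h
  have e : s / (s + t) * (x / s) + t / (s + t) * (y / t) = (x + y) / (s + t) := by
    field_simp
  rw [e] at h
  calc (s + t) * ((x + y) / (s + t)) ^ p
      ≤ (s + t) * (s / (s + t) * (x / s) ^ p + t / (s + t) * (y / t) ^ p) := by gcongr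
    _ = s * (x / s) ^ p + t * (y / t) ^ p := by field_simp

lemma picone_of_lt {p a b c d : ℝ} (hp : 1 < p) (ha : 0 ≤ a) (hb : 0 ≤ b) (hd : 0 < d)
    (hdc : d < c) :
    |c - d| ^ (p - 2) * (c - d) * (a ^ p / c ^ (p - 1) - b ^ p / d ^ (p - 1)) ≤
      |a - b| ^ p := by
  have he : 0 < c - d := sub_pos.2 hdc
  have hc : 0 < c := hd.trans hdc
  have hpow : |c - d| ^ (p - 2) * (c - d) = (c - d) ^ (p - 1) := by
    rw [abs_of_pos he, ← Real.rpow_add_one he.ne']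
    ring_nf
  have h := picone_perspective_add_le hp.le hb (abs_nonneg (a - b)) hd he
  rw [add_sub_cancel] at h
  have hle : a ^ p / c ^ (p - 1) ≤ (b + |a - b|) ^ p / c ^ (p - 1) := by
    gcongr
    linarith [le_abs_self (a - b)]
  rw [hpow, mul_comm, ← le_div_iff₀ (Real.rpow_pos_of_pos he _)]
  linarith

/-- Discrete Picone-type inequality (pointwise form): for `p ∈ (1,∞)`, `a, b ≥ 0` and
`c, d > 0`, `|c−d|^{p−2}(c−d)(a^p/c^{p−1} − b^p/d^{p−1}) ≤ |a−b|^p`. -/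
theorem discrete_picone (p : ℝ) (hp : 1 < p) (a b c d : ℝ)
    (ha : 0 ≤ a) (hb : 0 ≤ b) (hc : 0 < c) (hd : 0 < d) :
    |c - d| ^ (p - 2) * (c - d) * (a ^ p / c ^ (p - 1) - b ^ p / d ^ (p - 1)) ≤
      |a - b| ^ p := by
  rcases lt_trichotomy d c with h | rfl | h
  · exact picone_of_lt hp ha hb hd h
  · simpa using Real.rpow_nonneg (abs_nonneg (a - b)) p
  · have key := picone_of_lt hp hb ha hc h
    rw [abs_sub_comm d c, abs_sub_comm b a] at key
    linarith
end
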